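/- For every u ∈ ℂ, the Pfaffian of Φ̃(u) is a generating function for the operators Γ_k: Pf(Φ̃(u)) = Σ_{k=0}^{⌊n/2⌋} a_{n−2k}(u) · Γ_k in End(P), where for each nonnegative integer m, a_m(u) := Σ_{j=0}^{⌊m/2⌋} ( m! / (2^{2j} (m−2j)! j!) ) u^{m−2j} (a monic polynomial of degree m in u). -/

import Mathlib

open Matrix MvPolynomial

noncomputable section

/-- Index set for entries `x_{i,j}` with `i < j`. -/
abbrev Idx (n : ℕ) := {p : Fin n × Fin n // p.1 < p.2}

/-- Polynomial algebra on the space of alternating `n × n` matrices. -/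
abbrev P (n : ℕ) := MvPolynomial (Idx n) ℂ

/-- Multiplication operator `M_{i,j}` (with `M_{j,i} = -M_{i,j}`, `M_{i,i} = 0`). -/
def Mop (n : ℕ) (i j : Fin n) : Module.End ℂ (P n) :=
  if h : i < j then LinearMap.mulLeft ℂ (X ⟨(i, j), h⟩)
  else if h' : j < i then -LinearMap.mulLeft ℂ (X ⟨(j, i), h'⟩ : P n)
  else 0

/-- Derivation `D_{i,j} = ∂/∂x_{i,j}` (with `D_{j,i} = -D_{i,j}`, `D_{i,i} = 0`). -/
def Dop (n : ℕ) (i j : Fin n) : Module.End ℂ (P n) :=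
  if h : i < j then ((pderiv ⟨(i, j), h⟩ : Derivation ℂ (P n) (P n)) : P n →ₗ[ℂ] P n)
  else if h' : j < i then -((pderiv ⟨(j, i), h'⟩ : Derivation ℂ (P n) (P n)) : P n →ₗ[ℂ] P n)
  else 0

/-- The generic alternating matrix with entries in `P n`. -/
def genMat (n : ℕ) : Matrix (Fin n) (Fin n) (P n) := Matrix.of fun i j =>
  if h : i < j then X ⟨(i, j), h⟩
  else if h' : j < i then -X ⟨(j, i), h'⟩
  else 0

/-- The representation `π(g)` of `GL n ℂ` on `P n`, sending `x_{i,j}` to the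
`(i,j)`-entry of `g⁻¹ x ᵗ(g⁻¹)`. -/
def piHom (n : ℕ) (g : GL (Fin n) ℂ) : P n →ₐ[ℂ] P n :=
  aeval fun v : Idx n =>
    ((((g⁻¹ : GL (Fin n) ℂ) : Matrix (Fin n) (Fin n) ℂ).map (algebraMap ℂ (P n)) * genMat n *
      (((g⁻¹ : GL (Fin n) ℂ) : Matrix (Fin n) (Fin n) ℂ).map (algebraMap ℂ (P n)))ᵀ))
      v.1.1 v.1.2

/-- Pfaffian of a `2m × 2m` matrix with (possibly noncommuting) entries in a `ℂ`-algebra. -/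
def Pf {A : Type*} [Ring A] [Algebra ℂ A] {m : ℕ} (B : Matrix (Fin (2 * m)) (Fin (2 * m)) A) :
    A :=
  (((2 : ℂ) ^ m * m.factorial)⁻¹) • ∑ σ : Equiv.Perm (Fin (2 * m)),
    (Equiv.Perm.sign σ : ℤ) •
      (List.ofFn (fun i : Fin m =>
        B (σ ⟨2 * (i : ℕ), by have := i.isLt; omega⟩)
          (σ ⟨2 * (i : ℕ) + 1, by have := i.isLt; omega⟩))).prod

/-- The matrix `J_n` with 1's on the anti-diagonal. -/
def Jmat (A : Type*) [Zero A] [One A] (n : ℕ) : Matrix (Fin n) (Fin n) A :=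
  Matrix.of fun i j => if (i : ℕ) + (j : ℕ) = n - 1 then 1 else 0

/-- Reindexing `Fin n ⊕ Fin n ≃ Fin (2*n)`. -/
def sumEquiv (n : ℕ) : (Fin n ⊕ Fin n) ≃ Fin (2 * n) :=
  finSumFinEquiv.trans (finCongr (two_mul n).symm)

/-- The alternating matrix `Φ̃(u) = [[M, u·J_n], [−u·J_n, −J_n D J_n]]` over `End(P)`. -/
def PhiTilde (n : ℕ) (u : ℂ) : Matrix (Fin (2 * n)) (Fin (2 * n)) (Module.End ℂ (P n)) :=
  Matrix.reindex (sumEquiv n) (sumEquiv n)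
    (Matrix.fromBlocks (Matrix.of fun i j => Mop n i j) (u • Jmat (Module.End ℂ (P n)) n)
      (-(u • Jmat (Module.End ℂ (P n)) n))
      (-(Jmat (Module.End ℂ (P n)) n * (Matrix.of fun i j => Dop n i j) *
          Jmat (Module.End ℂ (P n)) n)))


/-- `Γ_k = Σ_{|I|=2k} Pf(x_I) Pf(∂_I)`. -/
def Gamma (n k : ℕ) : Module.End ℂ (P n) :=
  ∑ I : {I : Finset (Fin n) // I.card = 2 * k},
    Pf (Matrix.of fun a b : Fin (2 * k) =>
        Mop n (I.1.orderIsoOfFin I.2 a) (I.1.orderIsoOfFin I.2 b)) *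
      Pf (Matrix.of fun a b : Fin (2 * k) =>
        Dop n (I.1.orderIsoOfFin I.2 a) (I.1.orderIsoOfFin I.2 b))

/-- `a_m(u) = Σ_{j=0}^{⌊m/2⌋} (m!/(2^{2j} (m−2j)! j!)) u^{m−2j}`. -/
def aPoly (m : ℕ) (u : ℂ) : ℂ :=
  ∑ j ∈ Finset.range (m / 2 + 1),
    ((m.factorial : ℂ) /
        ((2 : ℂ) ^ (2 * j) * ((m - 2 * j).factorial : ℂ) * (j.factorial : ℂ))) *
      u ^ (m - 2 * j)

open scoped TensorProduct

def thetaPS {R : Type*} [Ring R] (a : PowerSeries R) : PowerSeries R :=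
  PowerSeries.mk fun n => n • PowerSeries.coeff n a

theorem thetaPS_mul {R : Type*} [Ring R] (a b : PowerSeries R) :
    thetaPS (a * b) = thetaPS a * b + a * thetaPS b := by
  ext n
  simp only [thetaPS, PowerSeries.coeff_mk, PowerSeries.coeff_mul, map_add]
  rw [Finset.smul_sum, ← Finset.sum_add_distrib]
  refine Finset.sum_congr rfl fun x hx => ?_
  rw [Finset.HasAntidiagonal.mem_antidiagonal] at hx
  rw [← hx, add_smul, smul_mul_assoc, mul_smul_comm]

theorem heis {R : Type*} [Ring R] [Algebra ℂ R] (X Y T : R) (hXT : X * T = T * X)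
    (hYT : Y * T = T * Y) (hYX : Y * X = X * Y + (1/2 : ℂ) • T ^ 2) (u : ℂ) (c : ℕ → ℂ)
    (c0 : c 0 = 1) (c1 : c 1 = u)
    (cs : ∀ m : ℕ, ((m : ℂ) + 2) * c (m + 2) = u * c (m + 1) + 1/2 * c m) (n : ℕ) :
    ((n.factorial : ℂ)⁻¹) • (X + Y + u • T) ^ n =
      ∑ am ∈ Finset.HasAntidiagonal.antidiagonal n, ∑ pq ∈ Finset.HasAntidiagonal.antidiagonal am.1,
        (((pq.1.factorial : ℂ)⁻¹) • X ^ pq.1) * (((pq.2.factorial : ℂ)⁻¹) • Y ^ pq.2) *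
          (c am.2 • T ^ am.2) := by
  set a : PowerSeries R := PowerSeries.mk fun p => ((p.factorial : ℂ)⁻¹) • X ^ p with ha
  set b : PowerSeries R := PowerSeries.mk fun p => ((p.factorial : ℂ)⁻¹) • Y ^ p with hb
  set h : PowerSeries R := PowerSeries.mk fun p => c p • T ^ p with hh
  obtain ⟨Z, hZ⟩ : ∃ Z : R, Z = (1/2 : ℂ) • T ^ 2 := ⟨_, rfl⟩
  rw [← hZ] at hYX
  have hfac : ∀ p : ℕ, (p + 1) • (((p+1).factorial : ℂ)⁻¹) = ((p.factorial : ℂ)⁻¹) := by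
    intro p
    rw [Nat.factorial_succ, nsmul_eq_mul]
    push_cast
    have : (p.factorial : ℂ) ≠ 0 := by exact_mod_cast p.factorial_ne_zero
    have : (p : ℂ) + 1 ≠ 0 := by exact_mod_cast p.succ_ne_zero
    field_simp
  have hexp : ∀ W : R, thetaPS (PowerSeries.mk fun p => ((p.factorial : ℂ)⁻¹) • W ^ p) =
      PowerSeries.X * (PowerSeries.C W * PowerSeries.mk fun p => ((p.factorial : ℂ)⁻¹) • W ^ p) := by
    intro W
    ext n
    cases n with
    | zero => simp [thetaPS]
    | succ p =>
      rw [PowerSeries.coeff_succ_X_mul, PowerSeries.coeff_C_mul]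
      simp only [thetaPS, PowerSeries.coeff_mk]
      rw [← smul_assoc, hfac, mul_smul_comm, pow_succ']
  have hYXp : ∀ p : ℕ, Y * X ^ (p+1) = X ^ (p+1) * Y + (p + 1) • (Z * X ^ p) := by
    have hZX : Z * X = X * Z := by
      rw [hZ, smul_mul_assoc, mul_smul_comm, pow_two, mul_assoc, ← hXT, ← mul_assoc, ← hXT, mul_assoc]
    intro p
    induction p with
    | zero => simp [hYX]
    | succ p ih =>
      rw [pow_succ, ← mul_assoc, ih, add_mul, mul_assoc, hYX, mul_add, ← mul_assoc]
      have : X ^ (p+1) * Z = Z * X ^ (p+1) := ((Commute.pow_right (show Commute Z X from hZX) _).eq).symm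
      rw [this, smul_mul_assoc, mul_assoc Z, ← pow_succ, add_assoc, succ_nsmul (Z * X^(p+1)) (p+1), add_comm (Z * _), ← pow_succ]
  have hYa : PowerSeries.C Y * a = a * PowerSeries.C Y + PowerSeries.X * (PowerSeries.C Z * a) := by
    ext n
    rw [map_add, PowerSeries.coeff_C_mul, PowerSeries.coeff_mul_C]
    cases n with
    | zero => simp [ha]
    | succ p =>
      rw [PowerSeries.coeff_succ_X_mul, PowerSeries.coeff_C_mul]
      simp only [ha, PowerSeries.coeff_mk]
      rw [mul_smul_comm, hYXp, smul_add, smul_mul_assoc, mul_smul_comm, ← hfac p, smul_assoc, smul_comm]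
  have hTh : thetaPS h = PowerSeries.X * (PowerSeries.C (u • T) * h) +
      PowerSeries.X * (PowerSeries.X * (PowerSeries.C Z * h)) := by
    ext n
    match n with
    | 0 => simp [thetaPS]
    | 1 => 
      rw [map_add, PowerSeries.coeff_succ_X_mul, PowerSeries.coeff_succ_X_mul, PowerSeries.coeff_C_mul]
      simp [thetaPS, hh, c0, c1]
    | m + 2 => 
      rw [map_add, PowerSeries.coeff_succ_X_mul, PowerSeries.coeff_succ_X_mul, PowerSeries.coeff_C_mul,
        PowerSeries.coeff_succ_X_mul, PowerSeries.coeff_C_mul]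
      simp only [thetaPS, hh, PowerSeries.coeff_mk, hZ]
      rw [smul_mul_smul_comm, smul_mul_smul_comm, ← pow_succ', ← pow_add, add_comm 2 m, ← add_smul,
        ← cs, ← Nat.cast_smul_eq_nsmul ℂ, smul_smul]
      push_cast
      rfl
  have hCT : ∀ W : R, W * T = T * W → W * Z = Z * W := by
    intro W hW
    rw [hZ]
    exact ((Commute.pow_right (show Commute W T from hW) 2).smul_right _).eq
  have hCa : ∀ S V : R, V * S = S * V → ∀ r : ℕ → ℂ,
      PowerSeries.C S * (PowerSeries.mk fun p => r p • V ^ p) =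
      (PowerSeries.mk fun p => r p • V ^ p) * PowerSeries.C S := by
    intro S V hSV r
    ext n
    rw [PowerSeries.coeff_C_mul, PowerSeries.coeff_mul_C, PowerSeries.coeff_mk]
    exact (((show Commute S V from hSV.symm).pow_right n).smul_right (r n)).eq
  have hXm : ∀ f : PowerSeries R, f * PowerSeries.X = PowerSeries.X * f := fun f =>
    (PowerSeries.commute_X f).eq
  have key : thetaPS (a * b * h) = PowerSeries.X * (PowerSeries.C (X + Y + u • T) * (a * b * h)) := by
    have hXZ := hCT X hXT
    have hYZ := hCT Y hYT
    have e1 : PowerSeries.C (u • T) * a = a * PowerSeries.C (u • T) := hCa _ _ (by simp [hXT]) _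
    have e2 : PowerSeries.C (u • T) * b = b * PowerSeries.C (u • T) := hCa _ _ (by simp [hYT]) _
    have e3 : PowerSeries.C Z * a = a * PowerSeries.C Z := hCa _ _ hXZ _
    have e4 : PowerSeries.C Z * b = b * PowerSeries.C Z := hCa _ _ hYZ _
    rw [thetaPS_mul, thetaPS_mul, hTh, ha, hexp X, hb, hexp Y, ← ha, ← hb]
    have e5 : a * (PowerSeries.X * (PowerSeries.C Y * b)) =
        PowerSeries.X * (PowerSeries.C Y * a * b) - PowerSeries.X * (PowerSeries.X * (PowerSeries.C Z * a * b)) := by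
      rw [hYa, ← mul_assoc a, hXm]
      noncomm_ring
    have e6 : a * b * (PowerSeries.X * (PowerSeries.C (u • T) * h)) =
        PowerSeries.X * (PowerSeries.C (u • T) * (a * b * h)) := by
      rw [← mul_assoc (a*b), hXm, mul_assoc, ← mul_assoc (a * b), mul_assoc a, ← e2, ← mul_assoc a, ← e1]
      simp only [mul_assoc]
    have e7 : a * b * (PowerSeries.X * (PowerSeries.X * (PowerSeries.C Z * h))) =
        PowerSeries.X * (PowerSeries.X * (PowerSeries.C Z * (a * b * h))) := by
      rw [← mul_assoc (a*b), hXm, mul_assoc, ← mul_assoc (a*b), hXm, mul_assoc, ← mul_assoc (a * b), mul_assoc a, ← e4, ← mul_assoc a, ← e3]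
      simp only [mul_assoc]
    rw [e5, mul_add, e6, e7, map_add, map_add]
    noncomm_ring
  have hco : ∀ n, PowerSeries.coeff n (a * b * h) = ((n.factorial : ℂ)⁻¹) • (X + Y + u • T) ^ n := by
    intro n
    induction n with
    | zero => simp [ha, hb, hh, c0, PowerSeries.coeff_mul]
    | succ n ih =>
      have := congrArg (PowerSeries.coeff (n+1)) key
      rw [PowerSeries.coeff_succ_X_mul, PowerSeries.coeff_C_mul, ih, thetaPS, PowerSeries.coeff_mk,
        mul_smul_comm, ← pow_succ', ← hfac n, smul_assoc, ← Nat.cast_smul_eq_nsmul ℂ, ← Nat.cast_smul_eq_nsmul ℂ] at this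
      exact smul_right_injective R (show ((n+1 : ℕ) : ℂ) ≠ 0 by exact_mod_cast n.succ_ne_zero) this
  rw [← hco, PowerSeries.coeff_mul]
  refine Finset.sum_congr rfl fun x _ => ?_
  rw [PowerSeries.coeff_mul, Finset.sum_mul]
  refine Finset.sum_congr rfl fun y _ => ?_
  simp [ha, hb, hh]

def cCoef (u : ℂ) (m : ℕ) : ℂ := aPoly m u / m.factorial

theorem cCoef_eq (u : ℂ) (m : ℕ) : cCoef u m =
   PowerSeries.coeff m ((PowerSeries.mk fun i => u ^ i / (i.factorial : ℂ)) *
     (PowerSeries.mk fun i => if Even i then (1/4 : ℂ) ^ (i/2) / ((i/2).factorial : ℂ) else 0)) := by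
  rw [PowerSeries.coeff_mul, cCoef, aPoly, Finset.sum_div]
  refine Finset.sum_of_injOn (fun j => (m - 2 * j, 2 * j)) ?_ ?_ ?_ ?_
  · intro i _ j _ h
    simp at h
    omega
  · intro j hj
    simp at hj ⊢
    omega
  · intro x hx hx'
    rw [Finset.HasAntidiagonal.mem_antidiagonal] at hx
    rw [PowerSeries.coeff_mk, PowerSeries.coeff_mk, if_neg, mul_zero]
    rintro ⟨j, hj⟩
    apply hx'
    refine ⟨j, ?_, ?_⟩
    · simp; omega
    · ext <;> simp <;> omega
  · intro j hj
    simp only [PowerSeries.coeff_mk]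
    rw [if_pos (even_two_mul j), Nat.mul_div_cancel_left j two_pos, pow_mul]
    have : (m.factorial : ℂ) ≠ 0 := by exact_mod_cast m.factorial_ne_zero
    have : (j.factorial : ℂ) ≠ 0 := by exact_mod_cast j.factorial_ne_zero
    have : ((m-2*j).factorial : ℂ) ≠ 0 := by exact_mod_cast (m-2*j).factorial_ne_zero
    field_simp
    norm_num
    rw [mul_right_comm, ← mul_pow]; norm_num

theorem cCoef_zero (u : ℂ) : cCoef u 0 = 1 := by simp [cCoef, aPoly]
theorem cCoef_one (u : ℂ) : cCoef u 1 = u := by simp [cCoef, aPoly]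
theorem cCoef_rec (u : ℂ) (m : ℕ) :
    ((m : ℂ) + 2) * cCoef u (m + 2) = u * cCoef u (m + 1) + 1/2 * cCoef u m := by
  simp only [cCoef_eq]
  set p : PowerSeries ℂ := (PowerSeries.mk fun i => u ^ i / (i.factorial : ℂ)) with hp
  set q : PowerSeries ℂ := (PowerSeries.mk fun i => if Even i then (1/4 : ℂ) ^ (i/2) / ((i/2).factorial : ℂ) else 0) with hq
  have h1 : thetaPS p = PowerSeries.X * (PowerSeries.C u * p) := by
    ext n
    cases n with
    | zero => simp [thetaPS]
    | succ k =>
      rw [PowerSeries.coeff_succ_X_mul, PowerSeries.coeff_C_mul]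
      simp only [thetaPS, PowerSeries.coeff_mk, hp]
      rw [Nat.factorial_succ, nsmul_eq_mul]
      push_cast
      have : (k.factorial : ℂ) ≠ 0 := by exact_mod_cast k.factorial_ne_zero
      have : (k : ℂ) + 1 ≠ 0 := by exact_mod_cast k.succ_ne_zero
      field_simp
      ring
  have h2 : thetaPS q = PowerSeries.X * (PowerSeries.X * (PowerSeries.C (1/2) * q)) := by
    ext n
    match n with
    | 0 => simp [thetaPS]
    | 1 => rw [PowerSeries.coeff_succ_X_mul]; simp [thetaPS, hq]
    | k + 2 =>
      rw [PowerSeries.coeff_succ_X_mul, PowerSeries.coeff_succ_X_mul, PowerSeries.coeff_C_mul]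
      simp only [thetaPS, PowerSeries.coeff_mk, hq]
      by_cases hk : Even k
      · obtain ⟨j, rfl⟩ := hk
        have e1 : (j + j + 2) / 2 = j + 1 := by omega
        have e2 : (j + j) / 2 = j := by omega
        rw [if_pos ⟨j+1, by omega⟩, if_pos ⟨j, rfl⟩, e1, e2, Nat.factorial_succ, nsmul_eq_mul]
        push_cast
        have : (j.factorial : ℂ) ≠ 0 := by exact_mod_cast j.factorial_ne_zero
        have : (j : ℂ) + 1 ≠ 0 := by exact_mod_cast j.succ_ne_zero
        field_simp
        ring
      · rw [if_neg, if_neg hk]; · simp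
        rw [Nat.even_add]; simpa using hk
  have h3 := congrArg (PowerSeries.coeff (m+2)) (thetaPS_mul p q)
  have h4 : thetaPS p * q + p * thetaPS q = PowerSeries.X * (PowerSeries.C u * (p * q)) + PowerSeries.X * (PowerSeries.X * (PowerSeries.C (1/2) * (p * q))) := by
    rw [h1, h2]; ring
  rw [h4, map_add, PowerSeries.coeff_succ_X_mul, PowerSeries.coeff_succ_X_mul, PowerSeries.coeff_succ_X_mul, PowerSeries.coeff_C_mul,  PowerSeries.coeff_C_mul, thetaPS, PowerSeries.coeff_mk, nsmul_eq_mul] at h3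
  rw [← h3]; push_cast; rfl

theorem sum_cons {ι M : Type*} [Fintype ι] [AddCommMonoid M] (m : ℕ) (F : (Fin (m+1) → ι) → M) :
    ∑ f, F f = ∑ i, ∑ f : Fin m → ι, F (Fin.cons i f) := by
  rw [← Fintype.sum_prod_type']
  exact (Fintype.sum_equiv (Fin.consEquiv fun _ => ι) _ _ (fun x => rfl)).symm

/-- the ordered product of entries along a word -/
def wordProd {A ι : Type*} [Ring A] (B : ι → ι → A) (k : ℕ) (f : Fin (2 * k) → ι) : A :=
  (List.ofFn (fun i : Fin k =>
        B (f ⟨2 * (i : ℕ), by have := i.isLt; omega⟩)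
          (f ⟨2 * (i : ℕ) + 1, by have := i.isLt; omega⟩))).prod

theorem pow_expand {A Λ ι : Type*} [Ring A] [Algebra ℂ A] [Ring Λ] [Algebra ℂ Λ] [Fintype ι]
    (B : ι → ι → A) (e : ι → Λ) (k : ℕ) :
    (∑ i, ∑ j, B i j ⊗ₜ[ℂ] (e i * e j)) ^ k =
      ∑ f : Fin (2 * k) → ι, wordProd B k f ⊗ₜ[ℂ] (List.ofFn fun i => e (f i)).prod := by
  induction k with
  | zero => simp [wordProd, Algebra.TensorProduct.one_def]
  | succ k ih =>
    rw [pow_succ', ih, Finset.sum_mul]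
    refine Eq.trans ?_ (sum_cons (2 * k + 1) _).symm
    refine Finset.sum_congr rfl fun i _ => ?_
    rw [sum_cons (2 * k), Finset.sum_mul]
    refine Finset.sum_congr rfl fun j _ => ?_
    rw [Finset.mul_sum]
    refine Finset.sum_congr rfl fun f _ => ?_
    rw [Algebra.TensorProduct.tmul_mul_tmul]
    congr 1
    · rw [wordProd, wordProd, List.ofFn_succ, List.prod_cons]
      rfl
    · rw [List.ofFn_succ, List.prod_cons, List.ofFn_succ, List.prod_cons, mul_assoc]
      rfl

theorem sum_words {M : Type*} [AddCommMonoid M] (N r : ℕ) (F : (Fin r → Fin N) → M)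
    (hF : ∀ f, ¬ Function.Injective f → F f = 0) :
    ∑ f, F f = ∑ I : {I : Finset (Fin N) // I.card = r}, ∑ σ : Equiv.Perm (Fin r),
      F (fun a => I.1.orderIsoOfFin I.2 (σ a)) := by
  rw [← Fintype.sum_prod_type']
  symm
  refine Finset.sum_of_injOn
    (fun x : {I : Finset (Fin N) // I.card = r} × Equiv.Perm (Fin r) =>
      fun a => ((x.1.1.orderIsoOfFin x.1.2 (x.2 a) : x.1.1) : Fin N)) ?_ ?_ ?_ ?_
  · rintro ⟨⟨I, hI⟩, σ⟩ _ ⟨⟨K, hK⟩, τ⟩ _ h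
    simp only at h
    have hr : ∀ (I : Finset (Fin N)) (hI : I.card = r) (σ : Equiv.Perm (Fin r)),
        Set.range (fun a => ((I.orderIsoOfFin hI (σ a) : I) : Fin N)) = I := by
      intro I hI σ
      ext x
      constructor
      · rintro ⟨a, rfl⟩
        exact (I.orderIsoOfFin hI (σ a)).2
      · intro hx
        refine ⟨σ.symm ((I.orderIsoOfFin hI).symm ⟨x, hx⟩), by simp⟩
    have hIK : I = K := by
      have := hr I hI σ
      rw [h, hr K hK τ] at this
      exact_mod_cast this.symm
    subst hIK
    have : σ = τ := by
      ext1 a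
      have := congrFun h a
      simpa using this
    rw [this]
  · intro x _
    simp
  · intro f _ hf
    apply hF
    intro hinj
    apply hf
    have hc : (Finset.univ.image f).card = r := by
      rw [Finset.card_image_of_injective _ hinj, Finset.card_fin]
    let g : Fin r → Fin r := fun a =>
      ((Finset.univ.image f).orderIsoOfFin hc).symm ⟨f a, Finset.mem_image_of_mem _ (Finset.mem_univ a)⟩
    have hg : Function.Injective g := by
      intro a b hab
      have := ((Finset.univ.image f).orderIsoOfFin hc).symm.injective hab
      exact hinj (by simpa using this)
    refine ⟨⟨⟨Finset.univ.image f, hc⟩, Equiv.ofBijective g (Finite.injective_iff_bijective.1 hg)⟩, by simp, ?_⟩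
    funext a
    simp [g]
  · intro x _
    rfl

section extAlg
variable {A V : Type*} [Ring A] [Algebra ℂ A] [AddCommGroup V] [Module ℂ V]

theorem pf_pow {m : ℕ} (B : Fin (2 * m) → Fin (2 * m) → A) (w : Fin (2 * m) → V) :
    ((m.factorial : ℂ)⁻¹) • ((1/2 : ℂ) • ∑ i, ∑ j, B i j ⊗ₜ[ℂ]
      (ExteriorAlgebra.ι ℂ (w i) * ExteriorAlgebra.ι ℂ (w j))) ^ m =
    Pf (Matrix.of B) ⊗ₜ[ℂ] (List.ofFn fun i => ExteriorAlgebra.ι ℂ (w i)).prod := by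
  rw [smul_pow, pow_expand, Pf]
  have : ∑ f : Fin (2 * m) → Fin (2 * m), wordProd B m f ⊗ₜ[ℂ] (List.ofFn fun i => ExteriorAlgebra.ι ℂ (w (f i))).prod
      = ∑ σ : Equiv.Perm (Fin (2 * m)), (Equiv.Perm.sign σ : ℤ) • (wordProd B m σ ⊗ₜ[ℂ] (List.ofFn fun i => ExteriorAlgebra.ι ℂ (w i)).prod) := by
    symm
    refine Finset.sum_of_injOn (fun σ : Equiv.Perm (Fin (2 * m)) => (σ : Fin (2 * m) → Fin (2 * m))) ?_ ?_ ?_ ?_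
    · intro σ _ τ _ h
      exact Equiv.coe_fn_injective h
    · intro x _
      simp
    · intro f _ hf
      have : ¬ Function.Injective f := by
        intro hinj
        exact hf ⟨Equiv.ofBijective f (Finite.injective_iff_bijective.1 hinj), by simp, rfl⟩
      have h2 := (ExteriorAlgebra.ιMulti ℂ (M := V) (2 * m)).map_eq_zero_of_not_injective (fun i => w (f i))
        (fun h => this (fun a b hab => h (by simp [hab])))
      rw [ExteriorAlgebra.ιMulti_apply] at h2
      rw [h2, TensorProduct.tmul_zero]
    · intro σ _
      have h2 := (ExteriorAlgebra.ιMulti ℂ (M := V) (2 * m)).map_perm w σ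
      rw [ExteriorAlgebra.ιMulti_apply, ExteriorAlgebra.ιMulti_apply] at h2
      simp only [Function.comp] at h2
      rw [h2, TensorProduct.tmul_smul]
      rfl
  rw [this, ← TensorProduct.smul_tmul', TensorProduct.sum_tmul, smul_smul]
  congr 1
  rw [mul_inv, mul_comm]; simp

theorem pf_pow_sub {N : ℕ} (k : ℕ) (B : Fin N → Fin N → A) (w : Fin N → V) :
    ((k.factorial : ℂ)⁻¹) • ((1/2 : ℂ) • ∑ i, ∑ j, B i j ⊗ₜ[ℂ]
      (ExteriorAlgebra.ι ℂ (w i) * ExteriorAlgebra.ι ℂ (w j))) ^ k =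
    ∑ I : {I : Finset (Fin N) // I.card = 2 * k},
      Pf (Matrix.of fun a b : Fin (2 * k) => B (I.1.orderIsoOfFin I.2 a) (I.1.orderIsoOfFin I.2 b)) ⊗ₜ[ℂ]
        (List.ofFn fun a => ExteriorAlgebra.ι ℂ (w (I.1.orderIsoOfFin I.2 a))).prod := by
  rw [smul_pow, pow_expand, sum_words, smul_smul, Finset.smul_sum]
  · refine Finset.sum_congr rfl fun I _ => ?_
    rw [Pf, ← TensorProduct.smul_tmul', TensorProduct.sum_tmul]
    congr 1
    · rw [mul_inv, mul_comm]; simp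
    · refine Finset.sum_congr rfl fun σ _ => ?_
      have h2 := (ExteriorAlgebra.ιMulti ℂ (M := V) (2 * k)).map_perm (fun a => w (I.1.orderIsoOfFin I.2 a)) σ
      rw [ExteriorAlgebra.ιMulti_apply, ExteriorAlgebra.ιMulti_apply] at h2
      simp only [Function.comp] at h2
      rw [h2, TensorProduct.tmul_smul, ← TensorProduct.smul_tmul']
      rfl
  · intro f hf
    have h2 := (ExteriorAlgebra.ιMulti ℂ (M := V) (2 * k)).map_eq_zero_of_not_injective (fun i => w (f i))
        (fun h => hf (fun a b hab => h (by simp [hab])))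
    rw [ExteriorAlgebra.ιMulti_apply] at h2
    rw [h2, TensorProduct.tmul_zero]
end extAlg

/-! Grassmann relations -/

theorem list_sum_pow {Λ : Type*} [Ring Λ] (l : List Λ) (hc : ∀ a ∈ l, ∀ b ∈ l, a * b = b * a)
    (h0 : ∀ a ∈ l, a * a = 0) :
    l.sum ^ l.length = l.length.factorial • l.prod ∧ ∀ m, l.length < m → l.sum ^ m = 0 := by
  induction l with
  | nil => simp +contextual [Nat.pos_iff_ne_zero]
  | cons t l ih =>
    obtain ⟨ih1, ih2⟩ := ih (fun a ha b hb => hc a (by simp [ha]) b (by simp [hb]))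
      (fun a ha => h0 a (by simp [ha]))
    have hts : Commute t l.sum := by
      apply Commute.list_sum_right
      intro b hb
      exact hc t (by simp) b (by simp [hb])
    have htt := h0 t (by simp)
    have key : ∀ m, (t + l.sum) ^ (m + 1) = l.sum ^ (m + 1) + (m + 1) • (t * l.sum ^ m) := by
      intro m
      induction m with
      | zero => simp [add_comm]
      | succ m ihm =>
        rw [pow_succ', ihm, add_mul, mul_add, mul_add, mul_smul_comm, mul_smul_comm, ← mul_assoc t t, htt, zero_mul,
          smul_zero, add_zero, ← pow_succ' l.sum, ← mul_assoc l.sum t, ← hts.eq, mul_assoc, ← pow_succ' l.sum]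
        rw [succ_nsmul _ (m+1)]
        abel
    constructor
    · rw [List.sum_cons, List.length_cons, key, ih1, ih2 _ (Nat.lt_succ_self _), zero_add, mul_smul_comm, smul_smul,
        Nat.factorial_succ, List.prod_cons]
    · intro m hm
      rw [List.length_cons] at hm
      obtain ⟨m, rfl⟩ : ∃ m', m = m' + 1 := ⟨m - 1, by omega⟩
      rw [List.sum_cons, key, ih2 _ (by omega), ih2 _ (by omega)]
      simp

section grass
variable {Λ : Type*} [Ring Λ] {n : ℕ} (e f : Fin n → Λ)

structure Grass : Prop where
  ee : ∀ i j, e i * e j = -(e j * e i)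
  ff : ∀ i j, f i * f j = -(f j * f i)
  ef : ∀ i j, e i * f j = -(f j * e i)
  e0 : ∀ i, e i * e i = 0
  f0 : ∀ i, f i * f i = 0

variable {e f}

theorem Grass.te (G : Grass e f) (i j) : (e i * f i) * e j = e j * (e i * f i) := by
  rw [mul_assoc, ← neg_neg (f i * e j), ← G.ef, mul_neg, ← mul_assoc, ← mul_assoc, G.ee i j]; simp
theorem Grass.tf (G : Grass e f) (i j) : (e i * f i) * f j = f j * (e i * f i) := by
  rw [mul_assoc, G.ff i j, mul_neg, ← mul_assoc, ← mul_assoc, G.ef i j]; simp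
theorem Grass.tt (G : Grass e f) (i j) : (e i * f i) * (e j * f j) = (e j * f j) * (e i * f i) := by
  rw [← mul_assoc, G.te, mul_assoc, G.tf, mul_assoc]
theorem Grass.t0 (G : Grass e f) (i) : (e i * f i) * (e i * f i) = 0 := by
  rw [← mul_assoc, G.te, ← mul_assoc, G.e0]; simp
theorem Grass.et (G : Grass e f) (i) : e i * (e i * f i) = 0 := by
  rw [← mul_assoc, G.e0]; simp
theorem Grass.ft (G : Grass e f) (i) : f i * (e i * f i) = 0 := by
  rw [← G.tf, mul_assoc, G.f0]; simp

theorem Grass.vol (G : Grass e f) (l : List (Fin n)) :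
    (l.map e).prod * (l.reverse.map f).prod = (l.map fun i => e i * f i).prod := by
  induction l with
  | nil => simp
  | cons a l ih =>
    have hc : Commute (f a) ((l.map fun i => e i * f i).prod) := by
      apply Commute.list_prod_right
      intro x hx
      obtain ⟨i, _, rfl⟩ := List.mem_map.1 hx
      exact (G.tf i a).symm
    simp only [List.map_cons, List.prod_cons, List.reverse_cons, List.map_append, List.prod_append, List.map_nil, List.prod_nil, mul_one]
    rw [mul_assoc, ← mul_assoc _ _ (f a), ih, ← hc.eq, mul_assoc]

theorem Grass.emove (G : Grass e f) (l : List (Fin n)) (a) :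
    (l.map e).prod * f a = (-1) ^ l.length * (f a * (l.map e).prod) := by
  induction l with
  | nil => simp
  | cons b l ih =>
    simp only [List.map_cons, List.prod_cons, List.length_cons]
    have h : Commute (e b) ((-1 : Λ) ^ l.length) := ((Commute.neg_one_right (e b))).pow_right _
    rw [mul_assoc, ih, ← mul_assoc (e b), h.eq, mul_assoc, ← mul_assoc (e b) (f a), G.ef, pow_succ]
    simp [mul_assoc]

theorem Grass.split (G : Grass e f) (l : List (Fin n)) :
    (l.map e).prod * (l.map f).prod =
      (-1) ^ (l.length.choose 2) * (l.map fun i => e i * f i).prod := by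
  induction l with
  | nil => simp
  | cons a l ih =>
    simp only [List.map_cons, List.prod_cons, List.length_cons]
    have h : ∀ (x : Λ) k, Commute x ((-1 : Λ) ^ k) := fun x k => ((Commute.neg_one_right x)).pow_right _
    rw [Nat.choose_succ_succ' l.length 1, Nat.choose_one_right, pow_add]
    calc _ = e a * ((l.map e).prod * f a) * (l.map f).prod := by simp only [mul_assoc]
      _ = (e a * (-1) ^ l.length) * f a * ((l.map e).prod * (l.map f).prod) := by
          rw [G.emove]; simp only [mul_assoc]
      _ = (-1) ^ l.length * ((e a * f a) * (-1) ^ (l.length.choose 2)) * (l.map fun i => e i * f i).prod := by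
          rw [ih, (h _ _).eq]; simp only [mul_assoc]
      _ = _ := by rw [(h (e a * f a) _).eq]; simp only [mul_assoc]

theorem Grass.kill (G : Grass e f) (lI lK : List (Fin n)) (S : Finset (Fin n)) (hS : ∀ i, i ∉ S → i ∈ lI ∨ i ∈ lK) (m : ℕ) :
    ((lI.map e).prod * (lK.map f).prod) * (∑ i, e i * f i) ^ m =
    ((lI.map e).prod * (lK.map f).prod) * ((S.toList.map fun i => e i * f i).sum) ^ m := by
  have hz : ∀ i ∉ S, ((lI.map e).prod * (lK.map f).prod) * (e i * f i) = 0 := by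
    intro i hi
    have hce : Commute (e i * f i) ((lI.map e).prod) := by
      apply Commute.list_prod_right
      intro x hx
      obtain ⟨j, _, rfl⟩ := List.mem_map.1 hx
      exact G.te i j
    have hcf : Commute (e i * f i) ((lK.map f).prod) := by
      apply Commute.list_prod_right
      intro x hx
      obtain ⟨j, _, rfl⟩ := List.mem_map.1 hx
      exact G.tf i j
    rcases hS i hi with h | h
    · obtain ⟨s, t, rfl⟩ := List.append_of_mem h
      rw [mul_assoc, ← hcf.eq, ← mul_assoc]
      have hce' : Commute (e i * f i) ((t.map e).prod) := by
        apply Commute.list_prod_right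
        intro x hx
        obtain ⟨j, _, rfl⟩ := List.mem_map.1 hx
        exact G.te i j
      simp only [List.map_append, List.map_cons, List.prod_append, List.prod_cons]
      rw [mul_assoc (s.map e).prod, mul_assoc (e i), ← hce'.eq, ← mul_assoc (e i), G.et]
      simp
    · obtain ⟨s, t, rfl⟩ := List.append_of_mem h
      have hce' : Commute (e i * f i) ((t.map f).prod) := by
        apply Commute.list_prod_right
        intro x hx
        obtain ⟨j, _, rfl⟩ := List.mem_map.1 hx
        exact G.tf i j
      simp only [List.map_append, List.map_cons, List.prod_append, List.prod_cons]
      rw [mul_assoc, mul_assoc (s.map f).prod, mul_assoc (f i), ← hce'.eq, ← mul_assoc (f i), G.ft]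
      simp
  have hsum : (S.toList.map fun i => e i * f i).sum = ∑ i ∈ S, e i * f i := Finset.sum_map_toList S _
  rw [hsum]
  have hT : ∑ i, e i * f i = ∑ i ∈ S, e i * f i + ∑ i ∈ Sᶜ, e i * f i := (Finset.sum_add_sum_compl S _).symm
  have hz' : ((lI.map e).prod * (lK.map f).prod) * ∑ i ∈ Sᶜ, e i * f i = 0 := by
    rw [Finset.mul_sum]
    exact Finset.sum_eq_zero fun i hi => hz i (by simpa using hi)
  have hcomm : Commute (∑ i ∈ Sᶜ, e i * f i) (∑ i ∈ S, e i * f i) := by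
    apply Commute.sum_left
    intro i _
    apply Commute.sum_right
    intro j _
    exact G.tt i j
  induction m with
  | zero => simp
  | succ m ih =>
    rw [pow_succ, ← mul_assoc, ih, hT, mul_add, mul_assoc, mul_assoc _ _ (∑ i ∈ Sᶜ, e i * f i),
      ← (hcomm.pow_right m).eq, ← mul_assoc _ (∑ i ∈ Sᶜ, e i * f i), hz', zero_mul, add_zero, ← pow_succ]

theorem Grass.kill_zero (G : Grass e f) (lI lK : List (Fin n)) (S : Finset (Fin n)) (hS : ∀ i, i ∉ S → i ∈ lI ∨ i ∈ lK) (m : ℕ)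
    (hm : S.card < m) :
    ((lI.map e).prod * (lK.map f).prod) * (∑ i, e i * f i) ^ m = 0 := by
  rw [G.kill lI lK S hS, (list_sum_pow (S.toList.map fun i => e i * f i) ?_ ?_).2 _ (by simpa using hm), mul_zero]
  · intro a ha b hb
    obtain ⟨i, _, rfl⟩ := List.mem_map.1 ha
    obtain ⟨j, _, rfl⟩ := List.mem_map.1 hb
    exact G.tt i j
  · intro a ha
    obtain ⟨i, _, rfl⟩ := List.mem_map.1 ha
    exact G.t0 i

theorem Grass.kill_diag (G : Grass e f) (l : List (Fin n)) (hl : l.Nodup) (k : ℕ) (hk : l.length = 2 * k) :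
    ((l.map e).prod * (l.map f).prod) * (∑ i, e i * f i) ^ (n - 2 * k) =
      (-1) ^ k * ((n - 2 * k).factorial • ((List.finRange n).map fun i => e i * f i).prod) := by
  have hcard : (l.toFinsetᶜ : Finset (Fin n)).card = n - 2 * k := by
    rw [Finset.card_compl, List.toFinset_card_of_nodup hl, hk, Fintype.card_fin]
  rw [G.kill l l (l.toFinset)ᶜ (by intro i hi; left; simpa using hi)]
  have h1 := (list_sum_pow ((l.toFinsetᶜ : Finset (Fin n)).toList.map fun i => e i * f i) (by
    intro a ha b hb
    obtain ⟨i, _, rfl⟩ := List.mem_map.1 ha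
    obtain ⟨j, _, rfl⟩ := List.mem_map.1 hb
    exact G.tt i j) (by
    intro a ha
    obtain ⟨i, _, rfl⟩ := List.mem_map.1 ha
    exact G.t0 i)).1
  rw [List.length_map, Finset.length_toList, hcard] at h1
  rw [h1, G.split, hk, mul_smul_comm, mul_assoc, ← List.prod_append, ← List.map_append, mul_smul_comm]
  have hp : (l ++ (l.toFinsetᶜ : Finset (Fin n)).toList).Perm (List.finRange n) := by
    rw [List.perm_ext_iff_of_nodup]
    · intro a
      simp [em]
    · rw [List.nodup_append]
      refine ⟨hl, Finset.nodup_toList _, ?_⟩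
      intro a ha b hb
      rintro rfl
      simp at hb
      exact hb ha
    · exact List.nodup_finRange n
  have hpp := (hp.map fun i => e i * f i).prod_eq' (by
    rw [List.pairwise_map]
    exact List.pairwise_of_forall fun i j => G.tt i j)
  rw [hpp]
  congr 2
  have : (2 * k).choose 2 = k * (2 * k - 1) := by
    rw [Nat.choose_two_right, mul_assoc, Nat.mul_div_cancel_left _ two_pos]
  rw [this, pow_mul]
  rcases Nat.even_or_odd k with hk | hk
  · rw [hk.neg_one_pow, one_pow]
  · rw [hk.neg_one_pow, Odd.neg_one_pow]
    have := hk.pos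
    exact ⟨k - 1, by omega⟩
end grass

section concrete
variable (n : ℕ)

abbrev Lam := ExteriorAlgebra ℂ (Fin (2 * n) → ℂ)

def gvec (i : Fin (2 * n)) : Fin (2 * n) → ℂ := Pi.single i 1
def ggen (i : Fin (2 * n)) : Lam n := ExteriorAlgebra.ι ℂ (gvec n i)
def egen (i : Fin n) : Lam n := ggen n (sumEquiv n (Sum.inl i))
def fgen (i : Fin n) : Lam n := ggen n (sumEquiv n (Sum.inr (Fin.rev i)))

theorem grass_gen : Grass (egen n) (fgen n) where
  ee _ _ := eq_neg_of_add_eq_zero_left (ExteriorAlgebra.ι_add_mul_swap _ _)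
  ff _ _ := eq_neg_of_add_eq_zero_left (ExteriorAlgebra.ι_add_mul_swap _ _)
  ef _ _ := eq_neg_of_add_eq_zero_left (ExteriorAlgebra.ι_add_mul_swap _ _)
  e0 _ := ExteriorAlgebra.ι_sq_zero _
  f0 _ := ExteriorAlgebra.ι_sq_zero _

def volEl : Lam n := (List.ofFn fun i => ggen n i).prod

theorem volEl_eq : volEl n = ((List.finRange n).map fun i => egen n i * fgen n i).prod := by
  rw [← (grass_gen n).vol, ← List.prod_append, volEl, List.finRange_reverse, List.map_map,
    List.ofFn_congr (two_mul n), List.ofFn_add, List.ofFn_eq_map, List.ofFn_eq_map]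
  congr 2
  · apply List.map_congr_left
    intro i _
    simp only [Function.comp, fgen, Fin.rev_rev]
    rfl

theorem tmul_vol_inj {A : Type*} [Ring A] [Algebra ℂ A] (a b : A)
    (h : a ⊗ₜ[ℂ] volEl n = b ⊗ₜ[ℂ] volEl n) : a = b := by
  let φ : Lam n →ₗ[ℂ] ℂ := ExteriorAlgebra.liftAlternating
    (Pi.single (M := fun i => (Fin (2 * n) → ℂ) [⋀^Fin i]→ₗ[ℂ] ℂ) (2 * n) Matrix.detRowAlternating)
  have hφ : φ (volEl n) = 1 := by
    have : volEl n = ExteriorAlgebra.ιMulti ℂ (2 * n) (gvec n) := by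
      rw [ExteriorAlgebra.ιMulti_apply]; rfl
    rw [this]
    simp only [φ]
    rw [ExteriorAlgebra.liftAlternating_apply_ιMulti, Pi.single_eq_same]
    change Matrix.det (Matrix.of (gvec n)) = 1
    have h1 : Matrix.of (gvec n) = 1 := by
      ext i j
      simp [gvec, Matrix.one_apply, Pi.single_apply, eq_comm]
    rw [h1, Matrix.det_one]
  have h2 := congrArg (fun z => TensorProduct.rid ℂ A (LinearMap.lTensor A φ z)) h
  simpa [hφ] using h2

theorem DM_comm (k l i j : Fin n) : Dop n k l * Mop n i j = Mop n i j * Dop n k l +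
    (if k = i ∧ l = j then 1 else 0) - (if k = j ∧ l = i then 1 else 0) := by
  apply LinearMap.ext
  intro p
  rcases lt_trichotomy k l with h | h | h <;> rcases lt_trichotomy i j with h' | h' | h'
  · have h1 : ¬ (k = j ∧ l = i) := by rintro ⟨rfl, rfl⟩; exact absurd h h'.asymm
    have e1 : (i = k ∧ j = l) ↔ (k = i ∧ l = j) := by constructor <;> (rintro ⟨rfl, rfl⟩; exact ⟨rfl, rfl⟩)
    simp [Dop, Mop, h, h', h1, Module.End.mul_apply, Pi.single_apply, e1]
    split_ifs <;> simp
  · subst h'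
    have h1 : ¬ (k = i ∧ l = i) := by rintro ⟨rfl, rfl⟩; exact absurd h (lt_irrefl _)
    simp [Dop, Mop, h, h1]
  · have h1 : ¬ (k = i ∧ l = j) := by rintro ⟨rfl, rfl⟩; exact absurd h h'.asymm
    have e1 : (j = k ∧ i = l) ↔ (k = j ∧ l = i) := by constructor <;> (rintro ⟨rfl, rfl⟩; exact ⟨rfl, rfl⟩)
    simp [Dop, Mop, h, h', h'.asymm, h1, Module.End.mul_apply, Pi.single_apply, e1]
    split_ifs <;> simp
    abel
  · subst h
    have h1 : ¬ (k = i ∧ k = j) := by rintro ⟨rfl, rfl⟩; exact absurd h' (lt_irrefl _)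
    have h2 : ¬ (k = j ∧ k = i) := by rintro ⟨rfl, rfl⟩; exact absurd h' (lt_irrefl _)
    simp [Dop, Mop, h1, h2]
  · subst h; subst h'
    simp [Dop, Mop]
  · subst h
    have h1 : ¬ (k = i ∧ k = j) := by rintro ⟨rfl, rfl⟩; exact absurd h' (lt_irrefl _)
    have h2 : ¬ (k = j ∧ k = i) := by rintro ⟨rfl, rfl⟩; exact absurd h' (lt_irrefl _)
    simp [Dop, Mop, h1, h2]
  · have h1 : ¬ (k = i ∧ l = j) := by rintro ⟨rfl, rfl⟩; exact absurd h h'.asymm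
    have e1 : (i = l ∧ j = k) ↔ (k = j ∧ l = i) := by constructor <;> (rintro ⟨rfl, rfl⟩; exact ⟨rfl, rfl⟩)
    simp [Dop, Mop, h, h', h.asymm, h1, Module.End.mul_apply, Pi.single_apply, e1]
    split_ifs <;> simp
    abel
  · subst h'
    have h1 : ¬ (k = i ∧ l = i) := by rintro ⟨rfl, rfl⟩; exact absurd h (lt_irrefl _)
    simp [Dop, Mop, h1]
  · have h1 : ¬ (k = j ∧ l = i) := by rintro ⟨rfl, rfl⟩; exact absurd h h'.asymm
    have e1 : (j = l ∧ i = k) ↔ (k = i ∧ l = j) := by constructor <;> (rintro ⟨rfl, rfl⟩; exact ⟨rfl, rfl⟩)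
    simp [Dop, Mop, h, h', h.asymm, h'.asymm, h1, Module.End.mul_apply, Pi.single_apply, e1]
    split_ifs <;> simp

abbrev RR := Module.End ℂ (P n) ⊗[ℂ] Lam n

def XX : RR n := (1/2 : ℂ) • ∑ i, ∑ j, Mop n i j ⊗ₜ[ℂ] (egen n i * egen n j)
def YY' : RR n := (1/2 : ℂ) • ∑ i, ∑ j, Dop n i j ⊗ₜ[ℂ] (fgen n i * fgen n j)
def YY : RR n := (-1 : ℂ) • YY' n
def TT : RR n := 1 ⊗ₜ[ℂ] (∑ i, egen n i * fgen n i)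

theorem tau_comm_ee (i j k : Fin n) : (egen n k * fgen n k) * (egen n i * egen n j) =
    (egen n i * egen n j) * (egen n k * fgen n k) := by
  rw [← mul_assoc, (grass_gen n).te, mul_assoc, (grass_gen n).te, mul_assoc]
theorem tau_comm_ff (i j k : Fin n) : (egen n k * fgen n k) * (fgen n i * fgen n j) =
    (fgen n i * fgen n j) * (egen n k * fgen n k) := by
  rw [← mul_assoc, (grass_gen n).tf, mul_assoc, (grass_gen n).tf, mul_assoc]

theorem XT : XX n * TT n = TT n * XX n := by
  rw [XX, TT, smul_mul_assoc, mul_smul_comm, Finset.sum_mul, Finset.mul_sum]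
  simp only [Finset.sum_mul, Finset.mul_sum, Algebra.TensorProduct.tmul_mul_tmul, one_mul, mul_one, tau_comm_ee]

theorem YT : YY n * TT n = TT n * YY n := by
  rw [YY, YY', TT, smul_mul_assoc, mul_smul_comm, smul_mul_assoc, mul_smul_comm, Finset.sum_mul, Finset.mul_sum]
  simp only [Finset.sum_mul, Finset.mul_sum, Algebra.TensorProduct.tmul_mul_tmul, one_mul, mul_one, tau_comm_ff]

theorem ff_ee (k l i j : Fin n) : (fgen n k * fgen n l) * (egen n i * egen n j) =
    (egen n i * egen n j) * (fgen n k * fgen n l) := by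
  have G := grass_gen n
  have h : ∀ a b, fgen n a * egen n b = -(egen n b * fgen n a) := fun a b => by rw [G.ef, neg_neg]
  have c : ∀ b, (fgen n k * fgen n l) * egen n b = egen n b * (fgen n k * fgen n l) := fun b => by
    rw [mul_assoc, h l b, mul_neg, ← mul_assoc, h k b, neg_mul, neg_neg, mul_assoc]
  rw [← mul_assoc, c, mul_assoc, c, ← mul_assoc]

theorem DM_pair (x y : Fin n × Fin n) : Dop n x.1 x.2 * Mop n y.1 y.2 = Mop n y.1 y.2 * Dop n x.1 x.2 +
    (if x = y then 1 else 0) + (-1 : ℂ) • (if x.swap = y then 1 else 0) := by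
  rw [DM_comm]
  simp only [Prod.ext_iff, Prod.fst_swap, Prod.snd_swap]
  simp only [and_comm (a := x.1 = y.2)]
  module

theorem YX' : YY' n * XX n = XX n * YY' n - (1/2 : ℂ) • TT n ^ 2 := by
  have hX : XX n = (1/2 : ℂ) • ∑ x : Fin n × Fin n, Mop n x.1 x.2 ⊗ₜ[ℂ] (egen n x.1 * egen n x.2) := by
    rw [XX, Fintype.sum_prod_type]
  have hY : YY' n = (1/2 : ℂ) • ∑ x : Fin n × Fin n, Dop n x.1 x.2 ⊗ₜ[ℂ] (fgen n x.1 * fgen n x.2) := by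
    rw [YY', Fintype.sum_prod_type]
  have hT : TT n ^ 2 = ∑ x : Fin n × Fin n, (1 : Module.End ℂ (P n)) ⊗ₜ[ℂ] ((egen n x.1 * fgen n x.1) * (egen n x.2 * fgen n x.2)) := by
    rw [TT, pow_two, Algebra.TensorProduct.tmul_mul_tmul, mul_one, Finset.sum_mul_sum,
      ← Fintype.sum_prod_type', TensorProduct.tmul_sum]
  have h1 : ∀ x : Fin n × Fin n, (fgen n x.1 * fgen n x.2) * (egen n x.1 * egen n x.2) =
      (-1 : ℂ) • ((egen n x.1 * fgen n x.1) * (egen n x.2 * fgen n x.2)) := by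
    intro x
    rw [ff_ee, mul_assoc, ← mul_assoc (egen n x.2), (grass_gen n).ef]
    simp [mul_assoc]
  have h2 : ∀ x : Fin n × Fin n, (fgen n x.1 * fgen n x.2) * (egen n x.2 * egen n x.1) =
      ((egen n x.1 * fgen n x.1) * (egen n x.2 * fgen n x.2)) := by
    intro x
    rw [(grass_gen n).ee, mul_neg, h1]
    simp
  rw [hX, hY, hT, smul_mul_smul_comm, smul_mul_smul_comm, Finset.sum_mul_sum, Finset.sum_mul_sum]
  conv_rhs => rw [Finset.sum_comm]
  simp only [Algebra.TensorProduct.tmul_mul_tmul, DM_pair, TensorProduct.add_tmul,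
    TensorProduct.ite_tmul, Finset.sum_add_distrib, ← TensorProduct.smul_tmul', ← Finset.smul_sum,
    Finset.sum_ite_eq, Finset.mem_univ, if_true, Prod.fst_swap, Prod.snd_swap, h1, h2, TensorProduct.tmul_smul]
  simp only [ff_ee]
  module

theorem YX : YY n * XX n = XX n * YY n + (1/2 : ℂ) • TT n ^ 2 := by
  rw [YY, smul_mul_assoc, YX', mul_smul_comm]
  module

theorem sum_two {M : Type*} [AddCommMonoid M] (F : Fin (2 * n) → M) :
    ∑ i, F i = ∑ i, F (sumEquiv n (Sum.inl i)) + ∑ i, F (sumEquiv n (Sum.inr (Fin.rev i))) := by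
  rw [← (sumEquiv n).sum_comp, Fintype.sum_sum_type]
  congr 1
  exact (Equiv.sum_comp Fin.revPerm (fun i => F (sumEquiv n (Sum.inr i)))).symm

theorem Jmat_apply (A : Type*) [Zero A] [One A] (a b : Fin n) :
    Jmat A n a b = if b = Fin.rev a then 1 else 0 := by
  rw [Jmat, Matrix.of_apply]
  congr 1
  rw [Fin.ext_iff, Fin.val_rev]
  apply propext
  omega

theorem Phi_sum (u : ℂ) : (1/2 : ℂ) • ∑ i, ∑ j, PhiTilde n u i j ⊗ₜ[ℂ] (ggen n i * ggen n j) =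
    XX n + YY n + u • TT n := by
  have h11 : ∀ i j, PhiTilde n u (sumEquiv n (Sum.inl i)) (sumEquiv n (Sum.inl j)) = Mop n i j := by
    intro i j; simp [PhiTilde]
  have h12 : ∀ i j, PhiTilde n u (sumEquiv n (Sum.inl i)) (sumEquiv n (Sum.inr (Fin.rev j))) =
      if j = i then u • (1 : Module.End ℂ (P n)) else 0 := by
    intro i j; simp [PhiTilde, Jmat_apply]
  have h21 : ∀ i j, PhiTilde n u (sumEquiv n (Sum.inr (Fin.rev i))) (sumEquiv n (Sum.inl j)) =
      if j = i then (-u) • (1 : Module.End ℂ (P n)) else 0 := by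
    intro i j; simp [PhiTilde, Jmat_apply]; split_ifs <;> module
  have h22 : ∀ i j, PhiTilde n u (sumEquiv n (Sum.inr (Fin.rev i))) (sumEquiv n (Sum.inr (Fin.rev j))) =
      (-1 : ℂ) • Dop n i j := by
    intro i j; simp [PhiTilde, Jmat_apply, Matrix.mul_apply]; module
  rw [sum_two]
  simp only [sum_two, h11, h12, h21, h22]
  change (1/2 : ℂ) • (∑ i, (∑ j, Mop n i j ⊗ₜ[ℂ] (egen n i * egen n j) + 
      ∑ j, (if j = i then u • (1 : Module.End ℂ (P n)) else 0) ⊗ₜ[ℂ] (egen n i * fgen n j)) +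
    ∑ i, (∑ j, (if j = i then (-u) • (1 : Module.End ℂ (P n)) else 0) ⊗ₜ[ℂ] (fgen n i * egen n j) + 
      ∑ j, ((-1 : ℂ) • Dop n i j) ⊗ₜ[ℂ] (fgen n i * fgen n j))) = _
  have hfe : ∀ i, fgen n i * egen n i = (-1 : ℂ) • (egen n i * fgen n i) := fun i => by rw [(grass_gen n).ef]; simp
  simp only [TensorProduct.ite_tmul, Finset.sum_ite_eq', Finset.mem_univ, if_true,
    Finset.sum_add_distrib, hfe, TensorProduct.tmul_smul, ← TensorProduct.smul_tmul', ← Finset.smul_sum]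
  rw [XX, YY, YY', TT, TensorProduct.tmul_sum]
  module

theorem ofFn_prod {Λ : Type*} [Ring Λ] (w : Fin n → Λ) (r : ℕ) (I : Finset (Fin n)) (hI : I.card = r) :
    (List.ofFn fun a => w (I.orderIsoOfFin hI a)).prod =
      ((List.ofFn fun a => (I.orderIsoOfFin hI a : Fin n)).map w).prod := by
  rw [List.map_ofFn]; rfl

theorem mem_ofFn_I (r : ℕ) (I : Finset (Fin n)) (hI : I.card = r) (i : Fin n) (hi : i ∈ I) :
    i ∈ List.ofFn fun a => (I.orderIsoOfFin hI a : Fin n) := by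
  rw [List.mem_ofFn]
  exact ⟨(I.orderIsoOfFin hI).symm ⟨i, hi⟩, by simp⟩

theorem term_eq (u : ℂ) (p q m : ℕ) (hm : p + q + m = n) :
    (((p.factorial : ℂ)⁻¹) • XX n ^ p) * (((q.factorial : ℂ)⁻¹) • YY n ^ q) *
          (cCoef u m • TT n ^ m) = if p = q then (aPoly m u • Gamma n p) ⊗ₜ[ℂ] volEl n else 0 := by
  have G := grass_gen n
  have hX : ((p.factorial : ℂ)⁻¹) • XX n ^ p = _ := pf_pow_sub p (Mop n) (fun i => gvec n (sumEquiv n (Sum.inl i)))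
  have hY : ((q.factorial : ℂ)⁻¹) • YY' n ^ q = _ := pf_pow_sub q (Dop n) (fun i => gvec n (sumEquiv n (Sum.inr (Fin.rev i))))
  have hT : TT n ^ m = (1 : Module.End ℂ (P n)) ⊗ₜ[ℂ] ((∑ i, egen n i * fgen n i) ^ m) := by
    rw [TT, Algebra.TensorProduct.tmul_pow, one_pow]
  rw [YY, smul_pow, smul_comm, hX, hY, hT]
  change (∑ I : {I : Finset (Fin n) // I.card = 2 * p}, _ ⊗ₜ[ℂ] (List.ofFn fun a => egen n (I.1.orderIsoOfFin I.2 a)).prod) *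
    ((-1 : ℂ) ^ q • ∑ K : {I : Finset (Fin n) // I.card = 2 * q}, _ ⊗ₜ[ℂ] (List.ofFn fun a => fgen n (K.1.orderIsoOfFin K.2 a)).prod) * _ = _
  rw [mul_smul_comm, mul_smul_comm, smul_mul_assoc, smul_smul, Finset.sum_mul_sum, Finset.sum_mul]
  simp only [Finset.sum_mul, Algebra.TensorProduct.tmul_mul_tmul, mul_one, ofFn_prod]
  have hzero : ∀ (I K : Finset (Fin n)) (hI : I.card = 2 * p) (hK : K.card = 2 * q), p + q < (I ∪ K).card →
      (((List.ofFn fun a => (I.orderIsoOfFin hI a : Fin n)).map (egen n)).prod *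
      ((List.ofFn fun a => (K.orderIsoOfFin hK a : Fin n)).map (fgen n)).prod) * (∑ i, egen n i * fgen n i) ^ m = 0 := by
    intro I K hI hK hlt
    apply G.kill_zero _ _ (I ∪ K)ᶜ
    · intro i hi
      rw [Finset.mem_compl, not_not, Finset.mem_union] at hi
      exact hi.imp (mem_ofFn_I n _ I hI i) (mem_ofFn_I n _ K hK i)
    · have := Finset.card_le_univ (I ∪ K)
      rw [Finset.card_compl]
      rw [Fintype.card_fin] at *
      omega
  split_ifs with hpq
  · subst hpq
    have hin : ∀ I : {I : Finset (Fin n) // I.card = 2 * p}, _ = _ := fun I =>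
      Finset.sum_eq_single (s := Finset.univ)
        (f := fun K : {I : Finset (Fin n) // I.card = 2 * p} =>
          (Pf (Matrix.of fun a b : Fin (2 * p) =>
            Mop n (I.1.orderIsoOfFin I.2 a) (I.1.orderIsoOfFin I.2 b)) *
          Pf (Matrix.of fun a b : Fin (2 * p) =>
            Dop n (K.1.orderIsoOfFin K.2 a) (K.1.orderIsoOfFin K.2 b))) ⊗ₜ[ℂ]
          ((((List.ofFn fun a => (I.1.orderIsoOfFin I.2 a : Fin n)).map (egen n)).prod *
          ((List.ofFn fun a => (K.1.orderIsoOfFin K.2 a : Fin n)).map (fgen n)).prod) * (∑ i, egen n i * fgen n i) ^ m))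
        I (by
          intro K _ hKI
          rw [hzero I.1 K.1 I.2 K.2, TensorProduct.tmul_zero]
          by_contra hle
          apply hKI
          have h1 : I.1 = I.1 ∪ K.1 := Finset.eq_of_subset_of_card_le Finset.subset_union_left (by rw [I.2]; omega)
          have h2 : K.1 = I.1 ∪ K.1 := Finset.eq_of_subset_of_card_le Finset.subset_union_right (by rw [K.2]; omega)
          exact Subtype.ext (h2.trans h1.symm)) (by simp)
    rw [Finset.sum_congr rfl fun I _ => hin I]
    obtain rfl : m = n - 2 * p := by omega
    have hd : ∀ I : {I : Finset (Fin n) // I.card = 2 * p},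
      (((List.ofFn fun a => (I.1.orderIsoOfFin I.2 a : Fin n)).map (egen n)).prod *
          ((List.ofFn fun a => (I.1.orderIsoOfFin I.2 a : Fin n)).map (fgen n)).prod) * (∑ i, egen n i * fgen n i) ^ (n - 2 * p)
        = ((-1 : ℂ) ^ p * ((n - 2 * p).factorial : ℂ)) • volEl n := by
      intro I
      rw [G.kill_diag _ ?_ p (by simp), ← volEl_eq, mul_smul, Nat.cast_smul_eq_nsmul]
      · rcases neg_one_pow_eq_or ℂ p with h | h <;> rcases Nat.even_or_odd p with hp | hp <;>
          simp [hp.neg_one_pow]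
      · rw [List.nodup_ofFn]
        intro a b hab
        simpa using hab
    simp only [hd, TensorProduct.tmul_smul]
    rw [← Finset.smul_sum, smul_smul, ← TensorProduct.sum_tmul, ← TensorProduct.smul_tmul', Gamma]
    congr 1
    have hf : ((n - 2 * p).factorial : ℂ) ≠ 0 := by exact_mod_cast (n - 2 * p).factorial_ne_zero
    rw [cCoef]
    field_simp
    rw [← pow_mul, mul_comm p 2, pow_mul]
    simp
  · rw [Finset.sum_eq_zero, smul_zero]
    intro I _
    apply Finset.sum_eq_zero
    intro K _
    rw [hzero I.1 K.1 I.2 K.2, TensorProduct.tmul_zero]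
    have h1 := Finset.card_le_card (Finset.subset_union_left : I.1 ⊆ I.1 ∪ K.1)
    have h2 := Finset.card_le_card (Finset.subset_union_right : K.1 ⊆ I.1 ∪ K.1)
    rw [I.2] at h1
    rw [K.2] at h2
    omega

end concrete

theorem Pf_PhiTilde_generating (n : ℕ) (hn : 1 ≤ n) (u : ℂ) :
    Pf (PhiTilde n u) =
      ∑ k ∈ Finset.range (n / 2 + 1), aPoly (n - 2 * k) u • Gamma n k := by
  apply tmul_vol_inj n
  have h1 := pf_pow (fun i j => PhiTilde n u i j) (gvec n)
  have h2 := heis (XX n) (YY n) (TT n) (XT n) (YT n) (YX n) u (cCoef u) (cCoef_zero u) (cCoef_one u)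
    (cCoef_rec u) n
  rw [← Phi_sum] at h2
  refine Eq.trans (h1.symm.trans h2) ?_
  rw [TensorProduct.sum_tmul, Finset.sum_sigma']
  symm
  refine Finset.sum_of_injOn (fun k => (⟨(2 * k, n - 2 * k), (k, k)⟩ : (_ : ℕ × ℕ) × ℕ × ℕ)) ?_ ?_ ?_ ?_
  · intro i _ j _ h
    simp at h
    omega
  · intro k hk
    simp at hk ⊢
    omega
  · rintro ⟨⟨a, m⟩, ⟨p, q⟩⟩ hx hx'
    simp at hx
    rw [term_eq n u p q m (by omega), if_neg]
    rintro rfl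
    apply hx'
    refine ⟨p, by simp; omega, ?_⟩
    obtain ⟨h3, h4⟩ := hx
    subst h4
    have : n - 2 * p = m := by omega
    subst this
    simp [two_mul]
  · intro k hk
    simp at hk
    rw [term_eq n u k k (n - 2 * k) (by omega), if_pos rfl]

end
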